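/- (Consistency is preserved by the GPDR rule CONFLICT.) Suppose the configuration ⟨⟨σ', q', i+1⟩·M ∣ R₀,…,R_N; N⟩ is consistent with i + 1 ≤ N, and a frame R : Q → Val → Prop satisfies: (a) for every σ, R q' σ implies σ ≠ σ'; and (b) for all q and σ, F(R_i) q σ implies R q σ. Then the configuration ⟨∅ ∣ R₀', …, R_N'; N⟩ is consistent, where R_j' = fun q σ => R_j q σ ∧ R q σ for 1 ≤ j ≤ i + 1 and R_j' = R_j for j = 0 and i + 1 < j ≤ N. -/

import Mathlib

/-- The jump transition `⟨q, σ₁⟩ →δ ⟨q', σ₂⟩` of a DTSTS. -/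
def Jump {Q V : Type*}
    (δ : Set (Q × ((V → ℝ) → Prop) × ((V → ℝ) → (V → ℝ) → Prop) × Q))
    (q : Q) (σ₁ : V → ℝ) (q' : Q) (σ₂ : V → ℝ) : Prop :=
  ∃ φ φc, (q, φ, φc, q') ∈ δ ∧ φ σ₁ ∧ φc σ₁ σ₂

/-- The forward predicate transformer of the DTSTS `(Q, q₀, φ₀, δ)`. -/
def FTrans {Q V : Type*} (q₀ : Q) (φ₀ : (V → ℝ) → Prop)
    (δ : Set (Q × ((V → ℝ) → Prop) × ((V → ℝ) → (V → ℝ) → Prop) × Q))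
    (R : Q → (V → ℝ) → Prop) : Q → (V → ℝ) → Prop :=
  fun q' σ₂ => (q' = q₀ ∧ φ₀ σ₂) ∨
    ∃ q φ φc σ₁, (q, φ, φc, q') ∈ δ ∧ R q σ₁ ∧ φ σ₁ ∧ φc σ₁ σ₂

/-- Consistency of a GPDR configuration `⟨M ∣ R₀,…,R_N; N⟩` (Definition 8).
Frames are given as `R : ℕ → Q → (V → ℝ) → Prop` (only indices `≤ N` matter),
and the trace `M` is a list of triples `(σ, q, i)`. -/
structure Consistent {Q V : Type*} (q₀ : Q) (φ₀ : (V → ℝ) → Prop)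
    (δ : Set (Q × ((V → ℝ) → Prop) × ((V → ℝ) → (V → ℝ) → Prop) × Q))
    (φP : (V → ℝ) → Prop)
    (R : ℕ → Q → (V → ℝ) → Prop) (N : ℕ)
    (M : List ((V → ℝ) × Q × ℕ)) : Prop where
  /-- (Con-A): `R₀` at `q₀` is the initial condition… -/
  conA₁ : ∀ σ, R 0 q₀ σ ↔ φ₀ σ
  /-- (Con-A): …and is `False` at other locations. -/
  conA₂ : ∀ q, q ≠ q₀ → ∀ σ, ¬ R 0 q σ
  /-- (Con-B): the frames are increasing. -/
  conB : ∀ i, i < N → ∀ q σ, R i q σ → R (i + 1) q σ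
  /-- (Con-C): frames below `N` are safe. -/
  conC : ∀ i, i < N → ∀ q σ, R i q σ → φP σ
  /-- (Con-D): frames are closed under the forward predicate transformer. -/
  conD : ∀ i, i < N → ∀ q σ, FTrans q₀ φ₀ δ (R i) q σ → R (i + 1) q σ
  /-- (Con-E): level-`N` trace entries are in `R_N` and violate safety. -/
  conE : ∀ σ q, (σ, q, N) ∈ M → R N q σ ∧ ¬ φP σ
  /-- (Con-F): consecutive trace entries are connected by a transition. -/
  conF : ∀ k i (σ₁ : V → ℝ) (q₁ : Q) (σ₂ : V → ℝ) (q₂ : Q), i < N →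
    M[k]? = some (σ₁, q₁, i) → M[k + 1]? = some (σ₂, q₂, i + 1) →
    ∃ φ φc, (q₁, φ, φc, q₂) ∈ δ ∧ R i q₁ σ₁ ∧ φ σ₁ ∧ φc σ₁ σ₂

/-- Consistency is preserved by the GPDR rule CONFLICT. -/
theorem consistent_conflict {Q V : Type*} [Fintype V]
    (q₀ : Q) (φ₀ : (V → ℝ) → Prop)
    (δ : Set (Q × ((V → ℝ) → Prop) × ((V → ℝ) → (V → ℝ) → Prop) × Q))
    (φP : (V → ℝ) → Prop)
    (R : ℕ → Q → (V → ℝ) → Prop) (N i : ℕ)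
    (σ' : V → ℝ) (q' : Q) (M' : List ((V → ℝ) × Q × ℕ))
    (Rg : Q → (V → ℝ) → Prop)
    (hcons : Consistent q₀ φ₀ δ φP R N ((σ', q', i + 1) :: M'))
    (hiN : i + 1 ≤ N)
    (hgen : ∀ σ, Rg q' σ → σ ≠ σ')
    (hblock : ∀ q σ, FTrans q₀ φ₀ δ (R i) q σ → Rg q σ) :
    Consistent q₀ φ₀ δ φP
      (fun j => if 1 ≤ j ∧ j ≤ i + 1 then (fun q σ => R j q σ ∧ Rg q σ) else R j)
      N ([] : List ((V → ℝ) × Q × ℕ)) := by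
  have key : ∀ j q σ,
      (if 1 ≤ j ∧ j ≤ i + 1 then (fun q σ => R j q σ ∧ Rg q σ) else R j) q σ ↔
        R j q σ ∧ ((1 ≤ j ∧ j ≤ i + 1) → Rg q σ) := by
    intro j q σ
    by_cases h : 1 ≤ j ∧ j ≤ i + 1
    · rw [if_pos h]; exact ⟨fun x => ⟨x.1, fun _ => x.2⟩, fun x => ⟨x.1, x.2 h⟩⟩
    · rw [if_neg h]; exact ⟨fun x => ⟨x, fun h' => absurd h' h⟩, fun x => x.1⟩
  have hmono : ∀ {A B : Q → (V → ℝ) → Prop}, (∀ q σ, A q σ → B q σ) →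
      ∀ q σ, FTrans q₀ φ₀ δ A q σ → FTrans q₀ φ₀ δ B q σ := by
    rintro A B hAB q σ (h | ⟨q1, φ, φc, σ₁, h1, h2, h3⟩)
    · exact Or.inl h
    · exact Or.inr ⟨q1, φ, φc, σ₁, h1, hAB _ _ h2, h3⟩
  have hup : ∀ j k, j ≤ k → k ≤ N → ∀ q σ, R j q σ → R k q σ := by
    intro j k hjk
    induction k, hjk using Nat.le_induction with
    | base => intro _ q σ h; exact h
    | succ k hk ih =>
      intro hN q σ h
      exact hcons.conB k (by omega) q σ (ih (by omega) q σ h)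
  have h0 : ∀ q σ, R 0 q σ → Rg q σ := by
    intro q σ h
    by_cases hq : q = q₀
    · subst hq
      exact hblock _ _ (Or.inl ⟨rfl, (hcons.conA₁ σ).1 h⟩)
    · exact absurd h (hcons.conA₂ q hq σ)
  refine ⟨?_, ?_, ?_, ?_, ?_, ?_, ?_⟩
  · intro σ
    simpa using hcons.conA₁ σ
  · intro q hq σ h
    exact hcons.conA₂ q hq σ ((key 0 q σ).1 h).1
  · intro j hj q σ h
    have h := (key j q σ).1 h
    refine (key (j + 1) q σ).2 ⟨hcons.conB j hj q σ h.1, fun hb => ?_⟩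
    rcases Nat.eq_zero_or_pos j with rfl | hp
    · exact h0 q σ h.1
    · exact h.2 ⟨hp, by omega⟩
  · intro j hj q σ h
    exact hcons.conC j hj q σ ((key j q σ).1 h).1
  · intro j hj q σ h
    have h' : FTrans q₀ φ₀ δ (R j) q σ := hmono (fun q σ x => ((key j q σ).1 x).1) q σ h
    refine (key (j + 1) q σ).2 ⟨hcons.conD j hj q σ h', fun hb => ?_⟩
    exact hblock q σ (hmono (hup j i (by omega) (by omega)) q σ h')
  · intro σ q h
    simp at h
  · intro k j σ₁ q₁ σ₂ q₂ _ h
    simp at h
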